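/- arXiv:1008.4617 — 2 statements merged into one kernel-verified Lean document; each statement's English description precedes it below -/
import Mathlib

section
/- Let d be a bounded metric on ℤ, i.e. there exists C with d m n ≤ C for all m, n ∈ ℤ, and let B' = { a ∈ C₀(ℤ, ℂ) | ∀ m n ∈ ℤ, ‖a m − a n‖ ≤ d m n } be the ball of d-Lipschitz functions with constant 1. Then: (i) every a ∈ B' satisfies ‖a‖ ≤ C; (ii) for every h ∈ C₀(ℤ, ℝ) with h n > 0 for all n, the closure in C₀(ℤ, ℂ) of the compressed ball { b | ∃ a ∈ B', ∀ n, b n = (h n)^2 * a n } is compact. -/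
open scoped ZeroAtInfty

/-!
Letting `y → ∞` in `‖a x - a y‖ ≤ d x y ≤ C` gives `‖a x‖ ≤ C`. Hence every element of the
compressed ball is dominated pointwise by `‖w x‖ * C`, where `w = h ^ 2` vanishes at infinity. On a
set of functions dominated by a fixed function vanishing at infinity, pointwise convergence on a
discrete space is already uniform, because the tails are uniformly small; so such a set inherits
compactness from the product of closed balls given by Tychonoff's theorem.
-/

open Filter Set Topology

theorem tendstoLocallyUniformly_of_discreteTopology {ι X Y : Type*} [TopologicalSpace X]
    [DiscreteTopology X] [UniformSpace Y] {l : Filter ι} {F : ι → X → Y} {f : X → Y}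
    (h : ∀ x, Tendsto (F · x) l (𝓝 (f x))) : TendstoLocallyUniformly F f l := by
  intro u hu x
  refine ⟨{x}, mem_nhds_discrete.2 rfl, ?_⟩
  simpa only [mem_singleton_iff, forall_eq] using
    (Uniform.tendsto_nhds_right.1 (h x)).eventually_mem hu

section Dominated

variable {X E : Type*} [TopologicalSpace X] [SeminormedAddCommGroup E]

theorem norm_apply_le_of_forall_norm_sub_le [NoncompactSpace X] {a : C₀(X, E)} {C : ℝ} {x : X}
    (ha : ∀ y, ‖a x - a y‖ ≤ C) : ‖a x‖ ≤ C := by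
  have tendsto_norm_sub : Tendsto (fun y ↦ ‖a x - a y‖) (cocompact X) (𝓝 ‖a x‖) := by
    simpa only [sub_zero] using (tendsto_const_nhds.sub (zero_at_infty a)).norm
  exact le_of_tendsto' tendsto_norm_sub ha

theorem norm_le_of_forall_norm_apply_le [Nonempty X] {a : C₀(X, E)} {C : ℝ}
    (ha : ∀ x, ‖a x‖ ≤ C) : ‖a‖ ≤ C :=
  (BoundedContinuousFunction.norm_le_of_nonempty (f := a.toBCF)).2 ha

theorem tendsto_zeroAtInfty_of_tendstoLocallyUniformly_of_dominated {ι : Type*} {l : Filter ι}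
    {F : ι → C₀(X, E)} {f : C₀(X, E)} {g : X → ℝ} (hg : Tendsto g (cocompact X) (𝓝 0))
    (hFg : ∀ᶠ i in l, ∀ x, ‖F i x‖ ≤ g x)
    (hFf : TendstoLocallyUniformly (fun i ↦ ⇑(F i)) f l) : Tendsto F l (𝓝 f) := by
  rw [ZeroAtInftyContinuousMap.tendsto_iff_tendstoUniformly, Metric.tendstoUniformly_iff]
  intro ε hε
  have tail_tendsto : Tendsto (fun x ↦ ‖f x‖ + g x) (cocompact X) (𝓝 0) := by
    simpa only [norm_zero, add_zero] using (zero_at_infty f).norm.add hg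
  obtain ⟨K, hK, tail_lt⟩ := mem_cocompact.1 (tail_tendsto.eventually_lt_const hε)
  have uniform_on_K : TendstoUniformlyOn (fun i ↦ ⇑(F i)) f l K :=
    (tendstoLocallyUniformlyOn_iff_tendstoUniformlyOn_of_compact hK).1
      hFf.tendstoLocallyUniformlyOn
  filter_upwards [hFg, Metric.tendstoUniformlyOn_iff.1 uniform_on_K ε hε] with i dominated near x
  by_cases hx : x ∈ K
  · exact near x hx
  · calc dist (f x) (F i x) ≤ ‖f x‖ + ‖F i x‖ := dist_le_norm_add_norm _ _
      _ ≤ ‖f x‖ + g x := by gcongr; exact dominated x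
      _ < ε := tail_lt hx

theorem isCompact_setOf_forall_norm_apply_le [DiscreteTopology X] [ProperSpace E] {g : X → ℝ}
    (hg : Tendsto g (cocompact X) (𝓝 0)) : IsCompact {b : C₀(X, E) | ∀ x, ‖b x‖ ≤ g x} := by
  rw [isCompact_iff_ultrafilter_le_nhds']
  intro 𝓤 dominated
  have compact_pi : IsCompact (univ.pi fun x ↦ Metric.closedBall (0 : E) (g x)) :=
    isCompact_univ_pi fun x ↦ isCompact_closedBall 0 (g x)
  obtain ⟨f, f_mem, tendsto_f⟩ := compact_pi.ultrafilter_le_nhds' (𝓤.map (⇑)) <| by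
    rw [Ultrafilter.mem_map]
    filter_upwards [dominated] with b hb x _
    simpa using hb x
  have norm_f_le (x : X) : ‖f x‖ ≤ g x := by simpa using f_mem x (mem_univ x)
  let f₀ : C₀(X, E) := ⟨⟨f, continuous_of_discreteTopology⟩, squeeze_zero_norm norm_f_le hg⟩
  exact ⟨f₀, norm_f_le, tendsto_zeroAtInfty_of_tendstoLocallyUniformly_of_dominated hg dominated <|
    tendstoLocallyUniformly_of_discreteTopology (tendsto_pi_nhds.1 tendsto_f)⟩

end Dominated

theorem boundedMetric_lipschitzBall_general {X 𝕜 E : Type*} [TopologicalSpace X]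
    [DiscreteTopology X] [NoncompactSpace X] [NormedField 𝕜] [SeminormedAddCommGroup E]
    [NormedSpace 𝕜 E] [ProperSpace E] {d : X → X → ℝ} {C : ℝ} (hC : ∀ x y, d x y ≤ C) :
    (∀ a ∈ {a : C₀(X, E) | ∀ x y, ‖a x - a y‖ ≤ d x y}, ‖a‖ ≤ C) ∧
      ∀ w : X → 𝕜, Tendsto w (cocompact X) (𝓝 0) →
        IsCompact (closure {b : C₀(X, E) |
          ∃ a ∈ {a : C₀(X, E) | ∀ x y, ‖a x - a y‖ ≤ d x y}, ∀ x, b x = w x • a x}) := by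
  have norm_apply_le (a : C₀(X, E)) (ha : ∀ x y, ‖a x - a y‖ ≤ d x y) (x : X) : ‖a x‖ ≤ C :=
    norm_apply_le_of_forall_norm_sub_le fun y ↦ (ha x y).trans (hC x y)
  have : Nonempty X := (cocompact X).nonempty_of_neBot
  refine ⟨fun a ha ↦ norm_le_of_forall_norm_apply_le (norm_apply_le a ha), fun w hw ↦ ?_⟩
  have bound_tendsto : Tendsto (fun x ↦ ‖w x‖ * C) (cocompact X) (𝓝 0) := by
    simpa only [norm_zero, zero_mul] using hw.norm.mul_const C
  refine (isCompact_setOf_forall_norm_apply_le bound_tendsto).closure_of_subset ?_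
  rintro b ⟨a, ha, hb⟩ x
  calc ‖b x‖ = ‖w x‖ * ‖a x‖ := by rw [hb, norm_smul]
    _ ≤ ‖w x‖ * C := by gcongr; exact norm_apply_le a ha x

/-- for a bounded metric `d` on `ℤ` (with bound `C`), every element of the
ball `B' = { a ∈ C₀(ℤ, ℂ) | ∀ m n, ‖a m - a n‖ ≤ d m n }` of `1`-Lipschitz functions
has norm at most `C`, and for every strictly positive `h ∈ C₀(ℤ, ℝ)` the closure of the
`h`-compressed ball `{ b | ∃ a ∈ B', ∀ n, b n = (h n)^2 * a n }` is compact. -/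
theorem boundedMetric_lipschitzBall (d : ℤ → ℤ → ℝ)
    (hd0 : ∀ m n : ℤ, d m n = 0 ↔ m = n)
    (hdsymm : ∀ m n : ℤ, d m n = d n m)
    (hdtri : ∀ m n k : ℤ, d m n ≤ d m k + d k n)
    (C : ℝ) (hC : ∀ m n : ℤ, d m n ≤ C) :
    (∀ a ∈ {a : C₀(ℤ, ℂ) | ∀ m n : ℤ, ‖a m - a n‖ ≤ d m n}, ‖a‖ ≤ C) ∧
      (∀ h : C₀(ℤ, ℝ), (∀ n : ℤ, 0 < h n) →
        IsCompact (closure {b : C₀(ℤ, ℂ) |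
          ∃ a ∈ {a : C₀(ℤ, ℂ) | ∀ m n : ℤ, ‖a m - a n‖ ≤ d m n},
            ∀ n : ℤ, b n = ((h n : ℂ) ^ 2) * a n})) := by
  refine (boundedMetric_lipschitzBall_general hC).imp_right fun compact h _ ↦
    compact (fun n ↦ (h n : ℂ) ^ 2) ?_
  simpa using (zero_at_infty h).ofReal.pow 2
end

section
/- Let ρ and ω be probability distributions on ℤ and let μ be a coupling of ρ and ω such that the cost function (fun p : ℤ × ℤ => μ p * |p.1 − p.2|) is summable. Then for every a ∈ C₀(ℤ, ℂ) one has ‖∑' n, (ρ n − ω n) * a n‖ ≤ 2 * ‖a‖ * ∑' p : ℤ × ℤ, μ p * |p.1 − p.2|. -/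
open scoped ZeroAtInfty

/-!
Integrating `f x - f y` against a coupling of `ρ` and `ω` gives the pairing of `f` with `ρ - ω`, so
that pairing is at most the transport cost of any function dominating `‖f x - f y‖`. When distinct
points are at distance at least `δ`, a function bounded by `C` is Lipschitz with constant
`2 * C / δ`, and `(2 * C / δ) * dist x y` is such a dominating cost. On `ℤ` one has `δ = 1`.
-/

section Coupling

variable {α β E : Type*} [NormedAddCommGroup E] [NormedSpace ℝ E]

/-- `μ` is a coupling (transport plan) of the discrete measures with masses `ρ` and `ω`: a
nonnegative summable array, of any total mass, with row sums `ρ` and column sums `ω`. -/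
structure IsCoupling (μ : α × β → ℝ) (ρ : α → ℝ) (ω : β → ℝ) : Prop where
  nonneg : ∀ p, 0 ≤ μ p
  summable : Summable μ
  tsum_fst : ∀ x, ∑' y, μ (x, y) = ρ x
  tsum_snd : ∀ y, ∑' x, μ (x, y) = ω y

namespace IsCoupling

variable {μ : α × β → ℝ} {ρ : α → ℝ} {ω : β → ℝ} {f : α → E} {g : β → E}

theorem swap (hμ : IsCoupling μ ρ ω) : IsCoupling (μ ∘ Prod.swap) ω ρ where
  nonneg p := hμ.nonneg p.swap
  summable := hμ.summable.prod_symm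
  tsum_fst := hμ.tsum_snd
  tsum_snd := hμ.tsum_fst

theorem hasSum_fst (hμ : IsCoupling μ ρ ω) (x : α) : HasSum (fun y => μ (x, y)) (ρ x) :=
  hμ.tsum_fst x ▸ (hμ.summable.prod_factor x).hasSum

theorem hasSum_smul_fst (hμ : IsCoupling μ ρ ω) (hf : Summable fun p => μ p • f p.1) :
    HasSum (fun x => ρ x • f x) (∑' p, μ p • f p.1) :=
  hf.hasSum.prod_fiberwise fun x => (hμ.hasSum_fst x).smul_const (f x)

theorem hasSum_smul_snd (hμ : IsCoupling μ ρ ω) (hg : Summable fun p => μ p • g p.2) :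
    HasSum (fun y => ω y • g y) (∑' p, μ p • g p.2) := by
  rw [← (Equiv.prodComm β α).tsum_eq]
  exact hμ.swap.hasSum_smul_fst hg.prod_symm

theorem norm_tsum_smul_sub_tsum_smul_le (hμ : IsCoupling μ ρ ω) {c : α × β → ℝ}
    (hf : Summable fun p => μ p • f p.1) (hg : Summable fun p => μ p • g p.2)
    (hc : Summable fun p => μ p * c p) (hfg : ∀ p, ‖f p.1 - g p.2‖ ≤ c p) :
    ‖∑' x, ρ x • f x - ∑' y, ω y • g y‖ ≤ ∑' p, μ p * c p := by
  rw [(hμ.hasSum_smul_fst hf).tsum_eq, (hμ.hasSum_smul_snd hg).tsum_eq, ← hf.tsum_sub hg]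
  refine tsum_of_norm_bounded hc.hasSum fun p => ?_
  calc ‖μ p • f p.1 - μ p • g p.2‖ = μ p * ‖f p.1 - g p.2‖ := by
        rw [← smul_sub, norm_smul, Real.norm_of_nonneg (hμ.nonneg p)]
    _ ≤ μ p * c p := mul_le_mul_of_nonneg_left (hfg p) (hμ.nonneg p)

end IsCoupling

end Coupling

theorem summable_smul_of_norm_le {ι E : Type*} [NormedAddCommGroup E] [NormedSpace ℝ E]
    [CompleteSpace E] {w : ι → ℝ} {f : ι → E} {C : ℝ} (hw : Summable w) (hf : ∀ i, ‖f i‖ ≤ C) :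
    Summable fun i => w i • f i := by
  refine .of_norm_bounded (hw.norm.mul_right C) fun i => ?_
  rw [norm_smul]
  exact mul_le_mul_of_nonneg_left (hf i) (norm_nonneg _)

theorem norm_sub_le_mul_dist_of_pairwise_le_dist {α E : Type*} [PseudoMetricSpace α]
    [SeminormedAddCommGroup E] {f : α → E} {C δ : ℝ} (hδ : 0 < δ)
    (hsep : Pairwise fun x y : α => δ ≤ dist x y) (hf : ∀ x, ‖f x‖ ≤ C) (x y : α) :
    ‖f x - f y‖ ≤ 2 * C / δ * dist x y := by
  obtain rfl | hxy := eq_or_ne x y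
  · simp
  have hC : 0 ≤ C := (norm_nonneg _).trans (hf x)
  calc ‖f x - f y‖ ≤ C + C := norm_sub_le_of_le (hf x) (hf y)
    _ = 2 * C / δ * δ := by field_simp; ring
    _ ≤ 2 * C / δ * dist x y := by gcongr; exact hsep hxy

theorem weak_pairing_le_two_norm_mul_wasserstein_general {α E : Type*} [PseudoMetricSpace α]
    [NormedAddCommGroup E] [NormedSpace ℝ E] [CompleteSpace E] {ρ ω : α → ℝ} {μ : α × α → ℝ}
    {f : α → E} {C δ : ℝ} (hδ : 0 < δ) (hsep : Pairwise fun x y : α => δ ≤ dist x y)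
    (hμ : IsCoupling μ ρ ω) (hcost : Summable fun p => μ p * dist p.1 p.2)
    (hf : ∀ x, ‖f x‖ ≤ C) :
    ‖∑' x, (ρ x - ω x) • f x‖ ≤ 2 * C / δ * ∑' p, μ p * dist p.1 p.2 := by
  have hfst : Summable fun p => μ p • f p.1 := summable_smul_of_norm_le hμ.summable fun p => hf p.1
  have hsnd : Summable fun p => μ p • f p.2 := summable_smul_of_norm_le hμ.summable fun p => hf p.2
  have hLip (p : α × α) : ‖f p.1 - f p.2‖ ≤ 2 * C / δ * dist p.1 p.2 :=
    norm_sub_le_mul_dist_of_pairwise_le_dist hδ hsep hf p.1 p.2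
  simp only [sub_smul]
  rw [(hμ.hasSum_smul_fst hfst).summable.tsum_sub (hμ.hasSum_smul_snd hsnd).summable,
    ← tsum_mul_left]
  simp only [mul_left_comm (2 * C / δ)]
  refine hμ.norm_tsum_smul_sub_tsum_smul_le hfst hsnd ?_ hLip
  simpa only [mul_left_comm] using hcost.mul_left (2 * C / δ)

/-- for probability distributions `ρ, ω` on `ℤ` and a coupling `μ` with
summable cost for the usual metric `|m - n|`, every `a ∈ C₀(ℤ, ℂ)` satisfies
`‖∑' n, (ρ n - ω n) * a n‖ ≤ 2 * ‖a‖ * ∑' p, μ p * |p.1 - p.2|`. -/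
theorem weak_pairing_le_two_norm_mul_wasserstein
    (ρ ω : ℤ → ℝ)
    (hρpos : ∀ n : ℤ, 0 ≤ ρ n) (hρsum : Summable ρ) (hρ1 : ∑' n : ℤ, ρ n = 1)
    (hωpos : ∀ n : ℤ, 0 ≤ ω n) (hωsum : Summable ω) (hω1 : ∑' n : ℤ, ω n = 1)
    (μ : ℤ × ℤ → ℝ) (hμsum : Summable μ) (hμpos : ∀ p : ℤ × ℤ, 0 ≤ μ p)
    (hμρ : ∀ m : ℤ, ∑' n : ℤ, μ (m, n) = ρ m)
    (hμω : ∀ n : ℤ, ∑' m : ℤ, μ (m, n) = ω n)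
    (hcost : Summable (fun p : ℤ × ℤ => μ p * |(p.1 : ℝ) - (p.2 : ℝ)|))
    (a : C₀(ℤ, ℂ)) :
    ‖∑' n : ℤ, ((ρ n - ω n : ℝ) : ℂ) * a n‖ ≤
      2 * ‖a‖ * ∑' p : ℤ × ℤ, μ p * |(p.1 : ℝ) - (p.2 : ℝ)| := by
  simpa [Int.dist_eq] using weak_pairing_le_two_norm_mul_wasserstein_general one_pos
    Int.pairwise_one_le_dist ⟨hμpos, hμsum, hμρ, hμω⟩ hcost a.toBCF.norm_coe_le_norm
end
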